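/- Let C ⊆ V be a set of controllable vertices. Then every C-equivalence class U ⊆ N(C) is jointly controllable, i.e. ∑_{v∈U} ∂_{p_v} ∈ 𝓜. -/

import Mathlib

/-!
Call `F = (F_v)` a tuple of real polynomials and let `vf F = ∑_v F_v(q_v) ∂_{p_v}`. Such fields satisfy
`[[vf F, X₀], vf H] = vf (F H)'` (`lieB_lieB_vf`), so the space `S` of tuples with `vf F ∈ 𝓜` is closed
under the symmetric product `(F, H) ↦ (F H)'`.

For `c ∈ C`, the bracket `[∂_{q_c}, X₀]`, freed from its components at controllable vertices, is the field
`∑_v Q_v(q_v - q_c) ∂_{p_v}` with `Q_v = V''_{vc}`, summed over the neighbours `v ∉ C` of `c`. Brackets with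
`∂_{q_c}` give the derivatives of `Q`, and Taylor's formula, with powers of `q_c` as smooth coefficients,
replaces `q_v - q_c` by `q_v`. Hence all derivatives of the tuple `Q` lie in `S` (`MM.Qc_mem`).

The rest is algebra in `S`. On the set `B` of vertices where `Q` has maximal degree, the last but one
derivative of `Q` is `e_v (X + b_v)`. Symmetric products and interpolation on the finite set of values of
`e` yield `1_B (X + b)`. The operator `F ↦ (1_B (X + b) F)'` is diagonal in the powers of `X + b`, so `S`
contains the homogeneous parts of `Q` on `B` (`homog_mem`). Their coefficients lie in an algebra of
functions with unit `1_B`, whose joint level sets on `B` are the classes of `Q_v` modulo translation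
(`top_degree`). Removing `B` and inducting on the degree treats all vertices (`class_mem`). Each class is
obtained both as a constant tuple and as the derivative of a tuple in `S`; since `(F 1_A)' = F' 1_A`, this
permits intersecting the classes that belong to different `c ∈ C`, which gives the `C`-equivalence class.
-/

open scoped Classical
open Polynomial

noncomputable section

/-- Phase space ℝ^{2|V|}: positions `q = x.1` and momenta `p = x.2`. -/
abbrev Phase (V : Type) := (V → ℝ) × (V → ℝ)

/-- Lie bracket of vector fields: `[Y,Z](x) = DZ(x)·Y(x) − DY(x)·Z(x)`. -/
def lieB {V : Type} [Fintype V] (Y Z : Phase V → Phase V) : Phase V → Phase V :=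
  fun x => fderiv ℝ Z x (Y x) - fderiv ℝ Y x (Z x)

/-- The constant vector field `∂_{p_v}`. -/
def dp {V : Type} [Fintype V] [DecidableEq V] (v : V) : Phase V → Phase V :=
  fun _ => (0, Pi.single v 1)

/-- The constant vector field `∂_{q_v}`. -/
def dq {V : Type} [Fintype V] [DecidableEq V] (v : V) : Phase V → Phase V :=
  fun _ => (Pi.single v 1, 0)

/-- The constant vector field `∑_{v ∈ A} ∂_{p_v}`. -/
def dpSum {V : Type} [Fintype V] [DecidableEq V] (A : Finset V) : Phase V → Phase V :=
  fun _ => (0, ∑ v ∈ A, Pi.single v 1)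

/-- The constant vector field `∑_{v ∈ A} ∂_{q_v}`. -/
def dqSum {V : Type} [Fintype V] [DecidableEq V] (A : Finset V) : Phase V → Phase V :=
  fun _ => (∑ v ∈ A, Pi.single v 1, 0)

/-- The drift vector field
`X₀ = −∑_{v∈V*} γ_v p_v ∂_{p_v} + ∑_{v∈V} (p_v ∂_{q_v} − U_v'(q_v) ∂_{p_v})
      − ∑_{{u,v}∈E} V_{uv}'(q_u − q_v)(∂_{p_u} − ∂_{p_v})`,
written componentwise (using the symmetry `V_{vu}(x) = V_{uv}(−x)` of the
interaction potentials, the `∂_{p_v}`-component of the edge term at a vertex `v` is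
`−∑_{w ~ v} V_{vw}'(q_v − q_w)`). -/
def X0 {V : Type} [Fintype V] [DecidableEq V] (G : SimpleGraph V) [DecidableRel G.Adj]
    (γ : V → ℝ) (U : V → ℝ → ℝ) (Vp : V → V → Polynomial ℝ) : Phase V → Phase V :=
  fun x =>
    (x.2, fun v =>
      -(γ v) * x.2 v - deriv (U v) (x.1 v) -
        ∑ w ∈ Finset.univ.filter (fun w => G.Adj v w),
          (derivative (Vp v w)).eval (x.1 v - x.1 w))

/-- The smallest collection `𝓜` of vector fields on `ℝ^{2|V|}` that contains `∂_{p_v}`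
for every `v ∈ V*`, and is closed under linear combinations, Lie brackets,
bracketing with `X₀`, and multiplication by smooth scalar functions. -/
inductive MM {V : Type} [Fintype V] [DecidableEq V] (Vstar : Finset V)
    (X₀ : Phase V → Phase V) : (Phase V → Phase V) → Prop
  | basic (v : V) (hv : v ∈ Vstar) : MM Vstar X₀ (dp v)
  | add {Y Z : Phase V → Phase V} : MM Vstar X₀ Y → MM Vstar X₀ Z → MM Vstar X₀ (Y + Z)
  | smul (a : ℝ) {Y : Phase V → Phase V} : MM Vstar X₀ Y → MM Vstar X₀ (a • Y)
  | lie {Y Z : Phase V → Phase V} : MM Vstar X₀ Y → MM Vstar X₀ Z → MM Vstar X₀ (lieB Y Z)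
  | lieX {Y : Phase V → Phase V} : MM Vstar X₀ Y → MM Vstar X₀ (lieB Y X₀)
  | mulS (f : Phase V → ℝ) (hf : ContDiff ℝ (⊤ : ℕ∞) f) {Y : Phase V → Phase V} :
      MM Vstar X₀ Y → MM Vstar X₀ (fun x => f x • Y x)

/-- A vertex `v` is controllable if `∂_{q_v} ∈ 𝓜` and `∂_{p_v} ∈ 𝓜`. -/
def Controllable {V : Type} [Fintype V] [DecidableEq V] (Vstar : Finset V)
    (X₀ : Phase V → Phase V) (v : V) : Prop :=
  MM Vstar X₀ (dq v) ∧ MM Vstar X₀ (dp v)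

/-- Two polynomials are equivalent if `f(·) = g(· + δ)` for some `δ ∈ ℝ`. -/
def PolyEquiv (f g : Polynomial ℝ) : Prop :=
  ∃ δ : ℝ, ∀ x : ℝ, f.eval x = g.eval (x + δ)

/-- `N(C)`: the set of vertices not in `C` having at least one neighbor in `C`. -/
def NC {V : Type} [Fintype V] [DecidableEq V] (G : SimpleGraph V) [DecidableRel G.Adj]
    (C : Finset V) : Finset V :=
  Finset.univ.filter fun v => v ∉ C ∧ ∃ c ∈ C, G.Adj c v

/-- `v` and `w` are `C`-equivalent: they are `C`-siblings (connected to `C` in exactly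
the same way) and for each `c ∈ C` adjacent to both, the polynomials `V''_{cv}` and
`V''_{cw}` are equivalent. -/
def CEquiv {V : Type} (G : SimpleGraph V) (Vp : V → V → Polynomial ℝ) (C : Finset V)
    (v w : V) : Prop :=
  (∀ c ∈ C, G.Adj c v ↔ G.Adj c w) ∧
  (∀ c ∈ C, G.Adj c v → G.Adj c w →
    PolyEquiv (derivative (derivative (Vp c v))) (derivative (derivative (Vp c w))))

/-! ### Interpolation and functional calculus -/

/-- A subspace invariant under `E` that contains a sum of eigenvectors also contains every
recombination of them whose coefficients depend only on the eigenvalues: interpolate `f` at the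
eigenvalues by a polynomial and apply that polynomial to `E`. -/
lemma eig_sum_mem {M ι : Type*} [AddCommGroup M] [Module ℝ M] (s : Finset ι)
    (E : M →ₗ[ℝ] M) (S : Submodule ℝ M) (hE : ∀ x ∈ S, E x ∈ S) (Fs : ι → M) (μ : ι → ℝ)
    (h : ∀ i ∈ s, E (Fs i) = μ i • Fs i) (hsum : ∑ i ∈ s, Fs i ∈ S) (f : ℝ → ℝ) :
    ∑ i ∈ s, f (μ i) • Fs i ∈ S := by
  have key : ∀ p : ℝ[X], ∑ i ∈ s, p.eval (μ i) • Fs i ∈ S := by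
    intro p
    induction p using Polynomial.induction_on with
    | C a =>
      simp only [eval_C, ← Finset.smul_sum]
      exact S.smul_mem _ hsum
    | add p q hp hq =>
      simp only [eval_add, add_smul, Finset.sum_add_distrib]
      exact S.add_mem hp hq
    | monomial n a ih =>
      have := hE _ ih
      rw [map_sum] at this
      convert this using 1
      refine Finset.sum_congr rfl fun i hi => ?_
      rw [map_smul, h i hi, smul_smul]
      congr 1
      simp [pow_succ, mul_assoc]
  convert key (Lagrange.interpolate (s.image μ) id f) using 1
  refine Finset.sum_congr rfl fun i hi => ?_
  have := Lagrange.eval_interpolate_at_node f (s := s.image μ) (v := id)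
    (Function.injective_id.injOn) (Finset.mem_image_of_mem μ hi)
  rw [← this]; rfl

/-- Functional calculus in an algebra of functions on a finite set that need not contain `1`: it is
closed under composition with functions `x ↦ f x * x` vanishing at `0`. -/
lemma mul_comp_mem {V : Type} [Fintype V] [DecidableEq V] (N : Submodule ℝ (V → ℝ))
    (hN : ∀ α ∈ N, ∀ β ∈ N, α * β ∈ N) (α : V → ℝ) (hα : α ∈ N) (f : ℝ → ℝ) :
    (fun v => f (α v) * α v) ∈ N := by
  have := eig_sum_mem Finset.univ (LinearMap.mulLeft ℝ α) N (fun x hx => hN _ hα _ hx)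
    (fun v => Pi.single v (α v)) α
    (by
      intro i _
      ext j
      by_cases hij : j = i
      · subst hij; simp
      · simp [hij])
    (by rw [Finset.univ_sum_single]; exact hα) f
  convert this using 1
  ext j
  simp [Finset.sum_apply, Pi.single_apply]

/-! ### Polynomial tuples and their symmetric product -/

/-- The indicator tuple of a set of vertices, as constant polynomials. -/
def indP {V : Type} (p : V → Prop) : V → ℝ[X] := fun v => if p v then 1 else 0

/-- Closure of a space of polynomial tuples under the symmetric product, the componentwise
operation `(F, G) ↦ (F G)'`. -/
def SymClosed {V : Type} (S : Submodule ℝ (V → ℝ[X])) : Prop :=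
  ∀ F ∈ S, ∀ G ∈ S, (fun v => derivative (F v * G v)) ∈ S

/-- The monomial tuple `v ↦ α_v (X + b_v)^k` with centres `-b_v`, linear in `α`. -/
def mono {V : Type} (b : V → ℝ) (k : ℕ) : (V → ℝ) →ₗ[ℝ] (V → ℝ[X]) where
  toFun α := fun v => C (α v) * (X + C (b v)) ^ k
  map_add' α β := by ext1 v; simp [add_mul]
  map_smul' a α := by ext1 v; simp [smul_eq_C_mul, mul_assoc]

lemma mono_apply {V : Type} (b : V → ℝ) (k : ℕ) (α : V → ℝ) (v : V) :
    mono b k α v = C (α v) * (X + C (b v)) ^ k := rfl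

lemma mono_mul {V : Type} (b : V → ℝ) (k l : ℕ) (α β : V → ℝ) :
    (fun v => derivative (mono b k α v * mono b l β v)) =
      ((k + l : ℕ) : ℝ) • mono b (k + l - 1) (α * β) := by
  ext1 v
  have : mono b k α v * mono b l β v = C (α v * β v) * (X + C (b v)) ^ (k + l) := by
    simp only [mono_apply, C_mul, pow_add]; ring
  rw [this]
  simp only [derivative_mul, derivative_C, zero_mul, zero_add, derivative_pow, Pi.smul_apply,
    mono_apply, Pi.mul_apply, smul_eq_C_mul, derivative_add, derivative_X, add_zero, mul_one]
  ring

lemma mono_mul_mem {V : Type} {S : Submodule ℝ (V → ℝ[X])} (hS : SymClosed S)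
    (b : V → ℝ) (k l m : ℕ) (hkl : k + l = m + 1) (α β : V → ℝ)
    (hα : mono b k α ∈ S) (hβ : mono b l β ∈ S) : mono b m (α * β) ∈ S := by
  have h := hS _ hα _ hβ
  rw [mono_mul, hkl] at h
  have h2 := S.smul_mem (((m + 1 : ℕ) : ℝ)⁻¹) h
  rw [smul_smul, inv_mul_cancel₀ (by positivity), one_smul] at h2
  simpa using h2

/-- If `S` contains the tuple `Y = 1_B (X + b)`, then `S` contains the homogeneous parts on `B`
(in powers of `X + b`) of each of its elements. The reason is that `F ↦ (Y F)'` preserves `S`, multiplies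
the part of degree `k` by `k + 1`, and kills what lives off `B`. -/
lemma homog_mem {V : Type} [Fintype V] {S : Submodule ℝ (V → ℝ[X])} (hS : SymClosed S)
    (b : V → ℝ) (B : V → Prop) [DecidablePred B]
    (hY : mono b 1 (fun v => if B v then 1 else 0) ∈ S)
    (F : V → ℝ[X]) (hF : F ∈ S) :
    (∀ k, mono b k (fun v => if B v then (taylor (-b v) (F v)).coeff k else 0) ∈ S) ∧
    (fun v => if B v then F v else 0) ∈ S := by
  set Y := mono b 1 (fun v => if B v then 1 else 0) with hYdef
  obtain ⟨n, hn⟩ : ∃ n, ∀ v, (F v).natDegree < n :=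
    ⟨(Finset.univ.sup fun v => (F v).natDegree) + 1, fun v =>
      Nat.lt_succ_of_le (Finset.le_sup (f := fun v => (F v).natDegree) (Finset.mem_univ v))⟩
  let E : (V → ℝ[X]) →ₗ[ℝ] (V → ℝ[X]) :=
    { toFun := fun G v => derivative (Y v * G v)
      map_add' := by intro G H; ext1 v; simp only [Pi.add_apply, mul_add, derivative_add]
      map_smul' := by
        intro a G; ext1 v
        simp only [Pi.smul_apply, mul_smul_comm, derivative_smul, RingHom.id_apply] }
  let c : ℕ → V → ℝ := fun k v => if B v then (taylor (-b v) (F v)).coeff k else 0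
  let Fs : ℕ → V → ℝ[X] := fun i =>
    match i with
    | 0 => fun v => if B v then 0 else F v
    | k + 1 => mono b k (c k)
  have hexp : ∀ v, F v = ∑ k ∈ Finset.range n,
      C ((taylor (-b v) (F v)).coeff k) * (X + C (b v)) ^ k := by
    intro v
    have h1 : F v = (taylor (-b v) (F v)).comp (X + C (b v)) := by
      rw [← taylor_apply, taylor_taylor]; simp
    conv_lhs => rw [h1, (taylor (-b v) (F v)).as_sum_range_C_mul_X_pow' 
      (by rw [natDegree_taylor]; exact hn v)]
    simp
  have hsum : ∑ i ∈ Finset.range (n + 1), Fs i = F := by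
    rw [Finset.sum_range_succ']
    ext1 v
    simp only [Pi.add_apply, Finset.sum_apply, Fs, mono_apply, c]
    by_cases hB : B v
    · simp only [hB, if_true, add_zero]; exact (hexp v).symm
    · simp [hB]
  have heig : ∀ i ∈ Finset.range (n + 1), E (Fs i) = ((i : ℕ) : ℝ) • Fs i := by
    intro i _
    rcases i with _ | k
    · ext1 v
      by_cases hB : B v <;> simp [E, Fs, Y, mono_apply, hB]
    · have := mono_mul b 1 k (fun v => if B v then 1 else 0) (c k)
      simp only [add_tsub_cancel_left] at this
      change (fun v => derivative (Y v * mono b k (c k) v)) = _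
      rw [this]
      have h2 : (fun v => if B v then (1 : ℝ) else 0) * c k = c k := by
        ext v; by_cases hB : B v <;> simp [c, hB]
      rw [h2, add_comm 1 k]
  have main := eig_sum_mem (Finset.range (n + 1)) E S (fun G hG => hS _ hY _ hG) Fs
    (fun i => (i : ℝ)) heig (by rw [hsum]; exact hF)
  constructor
  · intro k
    by_cases hk : k < n
    · have := main (fun x => if x = ((k + 1 : ℕ) : ℝ) then 1 else 0)
      simp only [Nat.cast_inj, ite_smul, one_smul, zero_smul] at this
      rw [Finset.sum_ite_eq' ] at this
      simpa [hk, Fs, c] using this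
    · convert S.zero_mem using 1
      ext1 v
      have : (taylor (-b v) (F v)).coeff k = 0 :=
        coeff_eq_zero_of_natDegree_lt (by rw [natDegree_taylor]; have := hn v; omega)
      simp [mono_apply, this]
  · have := main (fun x => if x = ((0 : ℕ) : ℝ) then 1 else 0)
    simp only [Nat.cast_inj, ite_smul, one_smul, zero_smul] at this
    rw [Finset.sum_ite_eq'] at this
    simp only [Finset.mem_range, Nat.zero_lt_succ, if_true, Fs] at this
    convert S.sub_mem hF this using 1
    ext1 v
    by_cases hB : B v <;> simp [hB]

/-! ### Separation of the classes of a single tuple -/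

lemma iterate_derivative_taylor (p : ℝ[X]) (δ : ℝ) (k : ℕ) :
    derivative^[k] (taylor δ p) = taylor δ (derivative^[k] p) := by
  induction k with
  | zero => rfl
  | succ k ih =>
    rw [Function.iterate_succ_apply', Function.iterate_succ_apply', ih]
    simp [taylor_apply, derivative_comp]

/-- Separation of the vertices at which `Q` has the maximal degree `d + 1`. The two highest derivatives
of `Q` provide there, after recentring, the tuples `1` and `X + b`; the coefficients of the recentred
polynomials then lie in an algebra of functions with unit, which contains the indicators of their
joint level sets, and these level sets are the translation classes. -/
lemma top_degree {V : Type} [Fintype V] [DecidableEq V] {S : Submodule ℝ (V → ℝ[X])}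
    (hS : SymClosed S) (Q : V → ℝ[X]) (d : ℕ)
    (hQ : ∀ k, (fun v => derivative^[k] (Q v)) ∈ S)
    (hd : ∀ v, (Q v).natDegree ≤ d + 1) :
    (∃ Y ∈ S, (fun v => derivative (Y v)) = indP fun v => (Q v).natDegree = d + 1) ∧
    (∀ F ∈ S, (fun v => if (Q v).natDegree = d + 1 then F v else 0) ∈ S) ∧
    (∀ v₀, (Q v₀).natDegree = d + 1 →
      indP (fun w => ∃ δ, Q w = taylor δ (Q v₀)) ∈ S ∧
      ∃ F ∈ S, (fun v => derivative (F v)) = indP fun w => ∃ δ, Q w = taylor δ (Q v₀)) := by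
  set e : V → ℝ := fun v => (derivative^[d] (Q v)).coeff 1 with he
  set l : V → ℝ := fun v => (derivative^[d] (Q v)).coeff 0 with hl
  set b : V → ℝ := fun v => l v / e v with hb
  have hL : ∀ v, derivative^[d] (Q v) = C (e v) * X + C (l v) := fun v =>
    eq_X_add_C_of_natDegree_le_one
      ((natDegree_iterate_derivative _ _).trans (by have := hd v; omega))
  have hB : ∀ v, (Q v).natDegree = d + 1 ↔ e v ≠ 0 := by
    intro v
    have h1 : e v = ((d + 1).factorial : ℝ) * (Q v).coeff (d + 1) := by
      simp only [he, coeff_iterate_derivative, nsmul_eq_mul, add_comm 1 d]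
      congr 2
      simpa using Nat.factorial_mul_descFactorial (Nat.le_succ d)
    rw [h1]
    constructor
    · intro h
      refine mul_ne_zero (by positivity) ?_
      rw [← h]
      simpa using (fun h0 : Q v = 0 => by simp [h0] at h)
    · intro h
      exact le_antisymm (hd v) (le_natDegree_of_ne_zero (right_ne_zero_of_mul h))
  simp only [hB]
  have hLb : ∀ v, e v ≠ 0 → derivative^[d] (Q v) = C (e v) * (X + C (b v)) := by
    intro v hv
    rw [hL v, mul_add, ← C_mul]
    simp only [hb]
    rw [mul_div_cancel₀ _ hv]
  -- the tuples of constants and linear functions obtained from the two highest derivatives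
  have he0 : mono b 0 e ∈ S := by
    convert hQ (d + 1) using 1
    ext1 v
    rw [Function.iterate_succ_apply', hL v]
    simp [mono_apply]
  have he2 : mono b 1 (e * e) ∈ S := by
    have := S.smul_mem (1 / 2 : ℝ) (hS _ (hQ d) _ (hQ d))
    convert this using 1
    ext1 v
    simp only [mono_apply, Pi.smul_apply, pow_one, Pi.mul_apply]
    by_cases hv : e v = 0
    · rw [hL v, hv]; simp
    · rw [hLb v hv, derivative_mul, derivative_mul]
      simp only [derivative_C, derivative_add, derivative_X, smul_eq_C_mul, C_mul, zero_mul,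
        zero_add, add_zero, mul_one]
      have : (C (1 / 2 : ℝ)) * 2 = 1 := by
        rw [show (2 : ℝ[X]) = C 2 from rfl, ← C_mul]; norm_num
      linear_combination (-(C (e v) * C (e v) * (X + C (b v)))) * this
  -- `N` is the set of coefficient tuples `α` with `α (X + b) ∈ S`; it is closed under products
  let N : Submodule ℝ (V → ℝ) := S.comap (mono b 1)
  have hN : ∀ α ∈ N, ∀ β ∈ N, α * β ∈ N := fun α hα β hβ =>
    mono_mul_mem hS b 1 1 1 rfl α β hα hβ
  have hone : (fun v => if e v ≠ 0 then (1 : ℝ) else 0) ∈ N := by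
    convert mul_comp_mem N hN _ he2 (fun x => x⁻¹) using 1
    ext v
    by_cases hv : e v = 0
    · simp [hv]
    · simp only [ne_eq, hv, not_false_eq_true, if_true, Pi.mul_apply]
      field_simp
  have hproj := fun F hF => homog_mem hS b (fun v => e v ≠ 0) hone F hF
  have heN : e ∈ N := by
    have := (hproj _ (hQ d)).1 1
    change mono b 1 e ∈ S
    convert this using 2
    ext v
    by_cases hv : e v = 0
    · simp [hv]
    · rw [if_pos hv, hLb v hv]
      simp [taylor_mul]
  have hinv : (fun v => (e v)⁻¹) ∈ N := by
    convert mul_comp_mem N hN _ heN (fun x => x⁻¹ * x⁻¹) using 1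
    ext v
    by_cases hv : e v = 0 <;> simp [hv]
  have hone0 : mono b 0 (fun v => if e v ≠ 0 then (1 : ℝ) else 0) ∈ S := by
    convert mono_mul_mem hS b 1 0 0 rfl _ _ hinv he0 using 2
    ext v
    by_cases hv : e v = 0 <;> simp [hv]
  refine ⟨⟨_, hone, ?_⟩, fun F hF => by convert (hproj F hF).2, fun v₀ hv₀ => ?_⟩
  · ext1 v
    by_cases hv : e v = 0 <;> simp [mono_apply, indP, hv]
  -- `c k` is the tuple of `k`-th coefficients of the recentred polynomials
  let c : ℕ → V → ℝ := fun k v => if e v ≠ 0 then (taylor (-b v) (Q v)).coeff k else 0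
  have hc : ∀ k, mono b k (c k) ∈ S := fun k => (hproj _ (hQ 0)).1 k
  have hc1 : ∀ k (α : V → ℝ), (∀ v, e v = 0 → α v = 0) → mono b (k + 1) α ∈ S → α ∈ N := by
    intro k
    induction k with
    | zero => intro α _ h; exact h
    | succ k ih =>
      intro α h0 h
      refine ih α h0 ?_
      convert mono_mul_mem hS b (k + 2) 0 (k + 1) rfl _ _ h hone0 using 2
      ext v
      by_cases hv : e v = 0
      · simp [hv, h0 v hv]
      · simp [hv]
  have hcN : ∀ k, c k ∈ N := by
    intro k
    rcases k with _ | k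
    · rcases d with _ | d
      · -- in degree one the recentred polynomial has no constant term
        convert N.zero_mem using 1
        ext v
        by_cases hv : e v = 0
        · simp [c, hv]
        · have h2 := hLb v hv
          simp only [Function.iterate_zero, id] at h2
          simp only [c, ne_eq, hv, not_false_eq_true, if_true]
          rw [h2]
          simp [taylor_mul]
      · -- in higher degree the square `(X + b)²` is available and raises constants to degree one
        have hsq : mono b 2 (fun v => if e v ≠ 0 then (1 : ℝ) else 0) ∈ S := by
          have h1 := (hproj _ (hQ d)).1 2
          have h2 : ∀ v, e v ≠ 0 → (taylor (-b v) (derivative^[d] (Q v))).coeff 2 = e v / 2 := by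
            intro v hv
            have h3 : (derivative (taylor (-b v) (derivative^[d] (Q v)))).coeff 1 = e v := by
              have := iterate_derivative_taylor (derivative^[d] (Q v)) (-b v) 1
              simp only [Function.iterate_one] at this
              rw [this, ← Function.iterate_succ_apply' derivative, hLb v hv]
              simp [taylor_mul]
            rw [coeff_derivative] at h3
            norm_num at h3
            linarith
          have h4 := S.smul_mem (2 : ℝ) (mono_mul_mem hS b 1 2 2 rfl _ _ hinv h1)
          rw [← map_smul] at h4
          convert h4 using 2
          ext v
          by_cases hv : e v = 0
          · simp [hv]
          · simp only [ne_eq, hv, not_false_eq_true, if_true, Pi.smul_apply, Pi.mul_apply,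
              smul_eq_mul]
            rw [h2 v hv]; field_simp
        have := mono_mul_mem hS b 0 2 1 rfl _ _ (hc 0) hsq
        change mono b 1 (c 0) ∈ S
        convert this using 2
        ext v
        by_cases hv : e v = 0 <;> simp [c, hv]
    · exact hc1 k _ (fun v hv => by simp [c, hv]) (hc _)
  have hind : ∀ n, (fun v => if e v ≠ 0 ∧ ∀ k < n, c k v = c k v₀ then (1 : ℝ) else 0) ∈ N := by
    intro n
    induction n with
    | zero => simpa using hone
    | succ n ih =>
      -- `c n` is first shifted by a multiple of the unit of `N` to take the nonzero value `1` at `v₀`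
      have h1 : (fun v => if e v ≠ 0 ∧ c n v = c n v₀ then (1 : ℝ) else 0) ∈ N := by
        have hz : c n - (c n v₀ - 1) • (fun v => if e v ≠ 0 then (1 : ℝ) else 0) ∈ N :=
          N.sub_mem (hcN n) (N.smul_mem _ hone)
        have := mul_comp_mem N hN _ hz (fun x => if x = 1 then 1 else 0)
        convert hN _ this _ hone using 1
        ext v
        by_cases hv : e v = 0
        · simp [hv]
        · by_cases h : c n v = c n v₀
          · simp [hv, h]
          · have : c n v - (c n v₀ - 1) ≠ 1 := fun h' => h (by linarith)
            simp [hv, h, this]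
      convert hN _ ih _ h1 using 1
      ext v
      simp only [Pi.mul_apply, Nat.lt_succ_iff_lt_or_eq, or_imp, forall_and, forall_eq]
      by_cases hv : e v = 0
      · simp [hv]
      · by_cases h : c n v = c n v₀ <;> simp [hv, h]
  have hclass : ∀ w, (e w ≠ 0 ∧ ∀ k < d + 2, c k w = c k v₀) ↔ ∃ δ, Q w = taylor δ (Q v₀) := by
    intro w
    constructor
    · rintro ⟨hw, h⟩
      refine ⟨b w - b v₀, ?_⟩
      have h1 : taylor (-b w) (Q w) = taylor (-b v₀) (Q v₀) := by
        ext k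
        by_cases hk : k < d + 2
        · simpa [c, hw, hv₀] using h k hk
        · rw [coeff_eq_zero_of_natDegree_lt, coeff_eq_zero_of_natDegree_lt] <;>
            rw [natDegree_taylor]
          · have := hd v₀; omega
          · have := hd w; omega
      have h2 := congrArg (taylor (b w)) h1
      rw [taylor_taylor, taylor_taylor] at h2
      simpa [sub_eq_add_neg] using h2
    · rintro ⟨δ, h⟩
      have h1 : derivative^[d] (Q w) = taylor δ (derivative^[d] (Q v₀)) := by
        rw [h, iterate_derivative_taylor]
      have hew : e w = e v₀ := by
        have := congrArg (fun p => coeff p 1) h1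
        simp only [hL] at this
        simpa [taylor_mul, coeff_X, coeff_C] using this
      have hw : e w ≠ 0 := hew ▸ hv₀
      refine ⟨hw, fun k _ => ?_⟩
      have hbw : b w = δ + b v₀ := by
        have := congrArg (fun p => coeff p 0) h1
        simp only [hLb w hw, hLb v₀ hv₀, hew] at this
        have h3 : e v₀ * b w = e v₀ * (δ + b v₀) := by
          simpa [taylor_mul, coeff_X, coeff_C, mul_coeff_zero] using this
        exact mul_left_cancel₀ hv₀ h3
      simp only [c, ne_eq, hw, hv₀, not_false_eq_true, if_true]
      rw [h, taylor_taylor, hbw]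
      congr 2
      ring_nf
  have hfin := hind (d + 2)
  simp only [hclass] at hfin
  refine ⟨?_, _, hfin, ?_⟩
  · convert mono_mul_mem hS b 1 0 0 rfl _ _ hfin hone0 using 1
    ext1 v
    by_cases h : ∃ δ, Q v = taylor δ (Q v₀)
    · simp [indP, mono_apply, h, ((hclass v).2 h).1]
    · simp [indP, mono_apply, h]
  · ext1 v
    by_cases h : ∃ δ, Q v = taylor δ (Q v₀) <;> simp [indP, mono_apply, h]

/-- For a tuple `Q` with all its derivatives in `S` and no nonzero constant component, the indicator of
each translation class of nonzero components lies in `S` and is also the derivative of a tuple in `S`;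
so is the indicator of the support of `Q`. The induction peels off the vertices of highest degree. -/
lemma class_mem {V : Type} [Fintype V] [DecidableEq V] {S : Submodule ℝ (V → ℝ[X])}
    (hS : SymClosed S) (d : ℕ) : ∀ (Q : V → ℝ[X])
    (_ : ∀ k, (fun v => derivative^[k] (Q v)) ∈ S)
    (_ : ∀ v, Q v ≠ 0 → (Q v).natDegree ≠ 0)
    (_ : ∀ v, (Q v).natDegree ≤ d),
    (∃ F ∈ S, (fun v => derivative (F v)) = indP fun v => Q v ≠ 0) ∧
    (∀ v₀, Q v₀ ≠ 0 →
      indP (fun w => ∃ δ, Q w = taylor δ (Q v₀)) ∈ S ∧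
      ∃ F ∈ S, (fun v => derivative (F v)) = indP fun w => ∃ δ, Q w = taylor δ (Q v₀)) := by
  induction d with
  | zero =>
    intro Q _ h0 hd
    have hz : ∀ v, Q v = 0 := fun v => by
      by_contra h
      exact h0 v h (Nat.le_zero.1 (hd v))
    refine ⟨⟨0, S.zero_mem, ?_⟩, fun v₀ h => absurd (hz v₀) h⟩
    ext1 v
    simp [indP, hz v]
  | succ d ih =>
    intro Q hQ h0 hd
    obtain ⟨⟨Y, hY, hY'⟩, hproj, htop⟩ := top_degree hS Q d hQ hd
    let Q' : V → ℝ[X] := fun v => if (Q v).natDegree = d + 1 then 0 else Q v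
    have hQ' : ∀ k, (fun v => derivative^[k] (Q' v)) ∈ S := by
      intro k
      convert S.sub_mem (hQ k) (hproj _ (hQ k)) using 1
      ext1 v
      by_cases h : (Q v).natDegree = d + 1 <;> simp [Q', h]
    obtain ⟨⟨F, hF, hF'⟩, hlow⟩ := ih Q' hQ'
      (by
        intro v hv
        by_cases h : (Q v).natDegree = d + 1
        · simp [Q', h] at hv
        · simp only [Q', h, if_false] at hv ⊢
          exact h0 v hv)
      (by
        intro v
        by_cases h : (Q v).natDegree = d + 1
        · simp [Q', h]
        · simp only [Q', h, if_false]
          have := hd v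
          omega)
    constructor
    · refine ⟨Y + F, S.add_mem hY hF, ?_⟩
      ext1 v
      have h1 := congrFun hY' v
      have h2 := congrFun hF' v
      simp only [Pi.add_apply, derivative_add] at h1 h2 ⊢
      rw [h1, h2]
      by_cases h : (Q v).natDegree = d + 1
      · have : Q v ≠ 0 := fun h' => by simp [h'] at h
        simp [indP, Q', h, this]
      · simp [indP, Q', h]
    · intro v₀ hv₀
      by_cases h : (Q v₀).natDegree = d + 1
      · exact htop v₀ h
      · have hv' : Q' v₀ = Q v₀ := by simp [Q', h]
        have := hlow v₀ (by rw [hv']; exact hv₀)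
        have hiff : ∀ w, (∃ δ, Q' w = taylor δ (Q' v₀)) ↔ ∃ δ, Q w = taylor δ (Q v₀) := by
          intro w
          rw [hv']
          by_cases hw : (Q w).natDegree = d + 1
          · simp only [Q', hw, if_true]
            constructor
            · rintro ⟨δ, h'⟩
              exact absurd ((taylor_eq_zero _ _).1 h'.symm) hv₀
            · rintro ⟨δ, h'⟩
              rw [h', natDegree_taylor] at hw
              exact absurd hw h
          · simp [Q', hw]
        simpa only [hiff] using this

/-! ### Brackets of vector fields -/

lemma fderiv_eq_of_line {E F : Type*} [NormedAddCommGroup E] [NormedSpace ℝ E]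
    [NormedAddCommGroup F] [NormedSpace ℝ F] {f : E → F} {x u : E} {w : F}
    (hf : DifferentiableAt ℝ f x) (h : HasDerivAt (fun t : ℝ => f (x + t • u)) w 0) :
    fderiv ℝ f x u = w := by
  rw [← hf.lineDeriv_eq_fderiv]
  exact h.deriv

/-- The vector field `∑_v F_v(q_v) ∂_{p_v}` of a tuple of polynomials. -/
def vf {V : Type} (F : V → ℝ[X]) : Phase V → Phase V :=
  fun x => (0, fun v => (F v).eval (x.1 v))

/-- The vector field `∑_v F_v(q_v - q_c) ∂_{p_v}`. -/
def vfShift {V : Type} (c : V) (F : V → ℝ[X]) : Phase V → Phase V :=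
  fun x => (0, fun v => (F v).eval (x.1 v - x.1 c))

section Fields

variable {V : Type} [Fintype V]

lemma contDiff_eval {E : Type*} [NormedAddCommGroup E] [NormedSpace ℝ E] (p : ℝ[X])
    {g : E → ℝ} (hg : ContDiff ℝ (⊤ : ℕ∞) g) :
    ContDiff ℝ (⊤ : ℕ∞) fun x => p.eval (g x) := by
  have := (p.contDiff_aeval (𝕜 := ℝ) (⊤ : ℕ∞)).comp hg
  simpa [Function.comp_def] using this

lemma contDiff_vf (F : V → ℝ[X]) : ContDiff ℝ (⊤ : ℕ∞) (vf F) := by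
  refine contDiff_const.prodMk (contDiff_pi.2 fun v => contDiff_eval _ ?_)
  fun_prop

lemma contDiff_vfShift (c : V) (F : V → ℝ[X]) : ContDiff ℝ (⊤ : ℕ∞) (vfShift c F) := by
  refine contDiff_const.prodMk (contDiff_pi.2 fun v => contDiff_eval _ ?_)
  fun_prop

lemma hasDerivAt_eval_line (p : ℝ[X]) (a s : ℝ) :
    HasDerivAt (fun t : ℝ => p.eval (a + t * s)) ((derivative p).eval a * s) 0 := by
  have h1 : HasDerivAt (fun t : ℝ => a + t * s) s 0 := by
    simpa using ((hasDerivAt_id (0 : ℝ)).mul_const s).const_add a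
  have h2 := p.hasDerivAt (a + 0 * s)
  have := HasDerivAt.comp (0 : ℝ) h2 h1
  rw [zero_mul, add_zero] at this
  exact this

lemma fderiv_vf (F : V → ℝ[X]) (x u : Phase V) :
    fderiv ℝ (vf F) x u = (0, fun v => (derivative (F v)).eval (x.1 v) * u.1 v) := by
  refine fderiv_eq_of_line ((contDiff_vf F).differentiable (by simp) x) ?_
  refine (hasDerivAt_const _ _).prodMk (hasDerivAt_pi.2 fun v => ?_)
  exact hasDerivAt_eval_line _ _ _

lemma fderiv_vfShift (c : V) (F : V → ℝ[X]) (x u : Phase V) :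
    fderiv ℝ (vfShift c F) x u =
      (0, fun v => (derivative (F v)).eval (x.1 v - x.1 c) * (u.1 v - u.1 c)) := by
  refine fderiv_eq_of_line ((contDiff_vfShift c F).differentiable (by simp) x) ?_
  refine (hasDerivAt_const _ _).prodMk (hasDerivAt_pi.2 fun v => ?_)
  refine (hasDerivAt_eval_line (F v) (x.1 v - x.1 c) (u.1 v - u.1 c)).congr_of_eventuallyEq
    (Filter.Eventually.of_forall fun t => congrArg (fun a => eval a (F v)) ?_)
  change x.1 v + t * u.1 v - (x.1 c + t * u.1 c) = _
  ring

variable [DecidableEq V] (G : SimpleGraph V) [DecidableRel G.Adj] (γ : V → ℝ) (U : V → ℝ → ℝ)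
  (Vp : V → V → ℝ[X])

lemma contDiff_X0 (hU : ∀ v, ContDiff ℝ (⊤ : ℕ∞) (U v)) :
    ContDiff ℝ (⊤ : ℕ∞) (X0 G γ U Vp) := by
  refine contDiff_snd.prodMk (contDiff_pi.2 fun v => ?_)
  refine ContDiff.sub (ContDiff.sub ?_ ?_) (ContDiff.sum fun w _ => contDiff_eval _ ?_)
  · fun_prop
  · exact (contDiff_infty_iff_deriv.1 (hU v)).2.comp (by fun_prop)
  · fun_prop

lemma fderiv_X0 (hU : ∀ v, ContDiff ℝ (⊤ : ℕ∞) (U v)) (x u : Phase V) :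
    fderiv ℝ (X0 G γ U Vp) x u = (u.2, fun v =>
      -(γ v) * u.2 v - deriv (deriv (U v)) (x.1 v) * u.1 v -
        ∑ w ∈ Finset.univ.filter (fun w => G.Adj v w),
          (derivative (derivative (Vp v w))).eval (x.1 v - x.1 w) * (u.1 v - u.1 w)) := by
  refine fderiv_eq_of_line ((contDiff_X0 G γ U Vp hU).differentiable (by simp) x) ?_
  have hlin : ∀ a s : ℝ, HasDerivAt (fun t : ℝ => a + t * s) s 0 := fun a s => by
    simpa using ((hasDerivAt_id (0 : ℝ)).mul_const s).const_add a
  refine HasDerivAt.prodMk ?_ (hasDerivAt_pi.2 fun v => ?_)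
  · refine hasDerivAt_pi.2 fun v => ?_
    exact hlin (x.2 v) (u.2 v)
  · refine HasDerivAt.sub (HasDerivAt.sub ?_ ?_) (HasDerivAt.fun_sum fun w _ => ?_)
    · exact (hlin (x.2 v) (u.2 v)).const_mul _
    · have h1 : HasDerivAt (deriv (U v)) (deriv (deriv (U v)) (x.1 v)) (x.1 v + 0 * u.1 v) := by
        rw [zero_mul, add_zero]
        exact ((contDiff_infty_iff_deriv.1 (contDiff_infty_iff_deriv.1 (hU v)).2).1
          (x.1 v)).hasDerivAt
      exact HasDerivAt.comp (0 : ℝ) h1 (hlin _ _)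
    · refine (hasDerivAt_eval_line (derivative (Vp v w)) (x.1 v - x.1 w)
        (u.1 v - u.1 w)).congr_of_eventuallyEq (Filter.Eventually.of_forall fun t =>
          congrArg (fun a => eval a (derivative (Vp v w))) ?_)
      change x.1 v + t * u.1 v - (x.1 w + t * u.1 w) = _
      ring

/-- For fields depending on positions only, bracketing one of them with the drift and the
result with the other gives the symmetric product: `[[F ∂_p, X₀], G ∂_p] = (F G)' ∂_p`. -/
lemma lieB_lieB_vf (hU : ∀ v, ContDiff ℝ (⊤ : ℕ∞) (U v)) (F H : V → ℝ[X]) :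
    lieB (lieB (vf F) (X0 G γ U Vp)) (vf H) = vf fun v => derivative (F v * H v) := by
  have h1 : lieB (vf F) (X0 G γ U Vp) = fun x : Phase V =>
      ((fun v => (F v).eval (x.1 v)), fun v => -(γ v) * (F v).eval (x.1 v) -
        (derivative (F v)).eval (x.1 v) * x.2 v) := by
    ext1 x
    simp only [lieB, fderiv_X0 G γ U Vp hU, fderiv_vf]
    ext v <;> simp [vf, X0]
  have hdiff : ContDiff ℝ (⊤ : ℕ∞) (lieB (vf F) (X0 G γ U Vp)) := by
    rw [h1]
    refine (contDiff_pi.2 fun v => contDiff_eval _ (by fun_prop)).prodMk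
      (contDiff_pi.2 fun v => ?_)
    refine ContDiff.sub (contDiff_const.mul (contDiff_eval _ (by fun_prop)))
      ((contDiff_eval _ (by fun_prop)).mul (by fun_prop))
  have h2 : ∀ x, fderiv ℝ (lieB (vf F) (X0 G γ U Vp)) x (vf H x) =
      (0, fun v => -((derivative (F v)).eval (x.1 v) * (H v).eval (x.1 v))) := by
    intro x
    refine fderiv_eq_of_line (hdiff.differentiable (by simp) x) ?_
    rw [h1]
    refine HasDerivAt.prodMk ?_ (hasDerivAt_pi.2 fun v => ?_)
    · simp only [vf, Prod.fst_add, Prod.smul_fst, smul_zero, add_zero]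
      exact hasDerivAt_const _ _
    · have h3 : HasDerivAt (fun t : ℝ => x.2 v + t * (H v).eval (x.1 v))
          ((H v).eval (x.1 v)) 0 := by
        simpa using ((hasDerivAt_id (0 : ℝ)).mul_const ((H v).eval (x.1 v))).const_add (x.2 v)
      have h4 := (h3.const_mul ((derivative (F v)).eval (x.1 v))).const_sub
        (-(γ v) * (F v).eval (x.1 v))
      simpa [vf] using h4
  ext1 x
  have : lieB (lieB (vf F) (X0 G γ U Vp)) (vf H) x =
      fderiv ℝ (vf H) x (lieB (vf F) (X0 G γ U Vp) x) -
        fderiv ℝ (lieB (vf F) (X0 G γ U Vp)) x (vf H x) := rfl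
  rw [this, h2, fderiv_vf, h1]
  ext v
  · simp [vf]
  · simp [vf]; ring

/-- Bracketing with `∂_{q_c}` differentiates `vfShift c F`, up to sign, when `F` vanishes at `c`. -/
lemma lieB_dq_vfShift (c : V) (F : V → ℝ[X]) (hF : F c = 0) :
    lieB (dq c) (vfShift c F) = (-1 : ℝ) • vfShift c fun v => derivative (F v) := by
  ext1 x
  have h1 : fderiv ℝ (dq c) x = 0 := by unfold dq; simp
  simp only [lieB, h1, fderiv_vfShift]
  ext v
  · simp [vfShift]
  · by_cases hv : v = c
    · subst hv; simp [vfShift, hF]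
    · simp [vfShift, dq, hv]

variable {Vstar : Finset V} {X₀ : Phase V → Phase V}

lemma MM.zero {Y : Phase V → Phase V} (h : MM Vstar X₀ Y) :
    MM Vstar X₀ (0 : Phase V → Phase V) := by
  simpa using h.smul 0

lemma MM.sum {ι : Type*} (s : Finset ι) (Y : ι → Phase V → Phase V)
    (h0 : MM Vstar X₀ (0 : Phase V → Phase V)) (h : ∀ i ∈ s, MM Vstar X₀ (Y i)) :
    MM Vstar X₀ (∑ i ∈ s, Y i) := by
  induction s using Finset.induction_on with
  | empty => simpa using h0
  | insert a s ha ih =>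
    rw [Finset.sum_insert ha]
    exact (h _ (by simp)).add (ih fun i hi => h i (by simp [hi]))

/-- Elimination of `q_c`: by Taylor's formula `F_v(q_v) = ∑_k q_c^k / k! · F_v^{(k)}(q_v - q_c)`,
and `𝓜` is closed under multiplication by the smooth functions `q_c^k / k!`. -/
lemma MM.vf_of_shift (c : V) (F : V → ℝ[X])
    (h : ∀ k, MM Vstar X₀ (vfShift c fun v => derivative^[k] (F v))) : MM Vstar X₀ (vf F) := by
  obtain ⟨n, hn⟩ : ∃ n, ∀ v, (F v).natDegree < n :=
    ⟨(Finset.univ.sup fun v => (F v).natDegree) + 1, fun v =>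
      Nat.lt_succ_of_le (Finset.le_sup (f := fun v => (F v).natDegree) (Finset.mem_univ v))⟩
  have := MM.sum (Vstar := Vstar) (X₀ := X₀) (Finset.range n)
    (fun k x => ((k.factorial : ℝ)⁻¹ * x.1 c ^ k) • vfShift c (fun v => derivative^[k] (F v)) x)
    (h 0).zero (fun k _ => MM.mulS _ (by fun_prop) (h k))
  convert this using 1
  ext1 x
  ext v
  · simp [vf, vfShift, Finset.sum_apply, Prod.fst_sum]
  · simp only [vf, vfShift, Finset.sum_apply, Prod.snd_sum, Prod.smul_snd, Pi.smul_apply,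
      smul_eq_mul]
    have h1 : (F v).eval (x.1 v) = (taylor (x.1 v - x.1 c) (F v)).eval (x.1 c) := by
      rw [taylor_eval]; congr 1; ring
    rw [h1, eval_eq_sum_range' (n := n) (by rw [natDegree_taylor]; exact hn v)]
    refine Finset.sum_congr rfl fun k _ => ?_
    have h2 : (derivative^[k] (F v)).eval (x.1 v - x.1 c) =
        (k.factorial : ℝ) * (taylor (x.1 v - x.1 c) (F v)).coeff k := by
      rw [taylor_coeff, ← Polynomial.factorial_smul_hasseDeriv]
      simp
    rw [h2]
    field_simp

/-- The tuple of polynomials `V''_{vc}` at the neighbours `v ∉ C` of `c`, zero at all other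
vertices. -/
def Qc (C : Finset V) (c : V) : V → ℝ[X] := fun v =>
  if v ∉ C ∧ G.Adj c v then derivative (derivative (Vp v c)) else 0

/-- The field `∑_{v ∉ C, v ~ c} V''_{vc}(q_v - q_c) ∂_{p_v}` is `[∂_{q_c}, X₀]` with its components
at the controllable vertices of `C` removed; brackets with `∂_{q_c}` give its derivatives. -/
lemma MM.Qc_mem (hU : ∀ v, ContDiff ℝ (⊤ : ℕ∞) (U v)) (C : Finset V)
    (hC : ∀ c ∈ C, Controllable Vstar (X0 G γ U Vp) c) (c : V) (hc : c ∈ C) (k : ℕ) :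
    MM Vstar (X0 G γ U Vp) (vf fun v => derivative^[k] (Qc G Vp C c v)) := by
  have hQc : Qc G Vp C c c = 0 := by simp [Qc]
  have hbase : MM Vstar (X0 G γ U Vp) (vfShift c (Qc G Vp C c)) := by
    have hx := (hC c hc).1.lieX
    have hrem := MM.sum (Vstar := Vstar) (X₀ := X0 G γ U Vp) C
      (fun v x => (-(lieB (dq c) (X0 G γ U Vp) x).2 v) • dp v x) (hC c hc).1.zero
      (fun v hv => MM.mulS _ (by
        have h1 : lieB (dq c) (X0 G γ U Vp) =
            fun x => fderiv ℝ (X0 G γ U Vp) x (Pi.single c 1, 0) := by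
          ext1 x
          have h1 : fderiv ℝ (dq c) x = 0 := by unfold dq; simp
          simp only [lieB, h1]
          simp [dq]
        have h2 : ContDiff ℝ (⊤ : ℕ∞) (lieB (dq c) (X0 G γ U Vp)) := by
          rw [h1]
          exact ((contDiff_X0 G γ U Vp hU).fderiv_right (by simp)).clm_apply contDiff_const
        exact (contDiff_pi.1 h2.snd v).neg) (hC v hv).2)
    convert hx.add hrem using 1
    ext1 x
    have h1 : fderiv ℝ (dq c) x = 0 := by unfold dq; simp
    have h2 : lieB (dq c) (X0 G γ U Vp) x = (0, fun v =>
        -(deriv (deriv (U v)) (x.1 v) * (Pi.single c 1 : V → ℝ) v) -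
        ∑ w ∈ Finset.univ.filter (fun w => G.Adj v w),
          (derivative (derivative (Vp v w))).eval (x.1 v - x.1 w) *
            ((Pi.single c 1 : V → ℝ) v - (Pi.single c 1 : V → ℝ) w)) := by
      simp only [lieB, h1, fderiv_X0 G γ U Vp hU]
      ext v <;> simp [dq]
    ext v
    · simp [vfShift, h2, dp, Finset.sum_apply, Prod.fst_sum]
    · simp only [vfShift, Pi.add_apply, Prod.snd_add, Finset.sum_apply, Prod.snd_sum, dp,
        Prod.smul_snd, Pi.smul_apply, smul_eq_mul]
      by_cases hv : v ∈ C
      · simp [Qc, hv, Pi.single_apply]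
      · have hvc : v ≠ c := fun h => hv (h ▸ hc)
        have hz : ∑ i ∈ C, -(lieB (dq c) (X0 G γ U Vp) x).2 i * (Pi.single i 1 : V → ℝ) v = 0 :=
          Finset.sum_eq_zero fun i hi => by
            have : v ≠ i := fun h => hv (h ▸ hi)
            simp [this]
        rw [hz, h2]
        simp only [Pi.single_apply, hvc, if_false, mul_zero, neg_zero, zero_sub, mul_neg, mul_ite,
          mul_one, Finset.sum_neg_distrib, neg_neg, add_zero, Finset.sum_ite_eq', Finset.mem_filter,
          Finset.mem_univ, true_and]
        by_cases ha : G.Adj c v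
        · simp [Qc, hv, ha, ha.symm]
        · have ha' : ¬ G.Adj v c := fun h => ha h.symm
          simp [Qc, ha, ha']
  have hiter : ∀ k, MM Vstar (X0 G γ U Vp)
      (vfShift c fun v => derivative^[k] (Qc G Vp C c v)) := by
    intro k
    induction k with
    | zero => exact hbase
    | succ k ih =>
      have := ((hC c hc).1.lie ih).smul (-1)
      rw [lieB_dq_vfShift c _ (by simp [hQc]), smul_smul] at this
      simpa [← Function.iterate_succ_apply'] using this
  refine MM.vf_of_shift c _ fun j => ?_
  simpa only [← Function.iterate_add_apply] using hiter (j + k)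

end Fields

/-! ### Assembly over the vertices of `C` -/

/-- Tuples `F` of polynomials with `∑_v F_v(q_v) ∂_{p_v} ∈ 𝓜`. -/
def polySpace {V : Type} [Fintype V] [DecidableEq V] (Vstar : Finset V)
    (X₀ : Phase V → Phase V) (h0 : MM Vstar X₀ (0 : Phase V → Phase V)) :
    Submodule ℝ (V → ℝ[X]) where
  carrier := {F | MM Vstar X₀ (vf F)}
  zero_mem' := by
    change MM Vstar X₀ (vf 0)
    convert h0 using 1
    ext x v <;> simp [vf]
  add_mem' := by
    intro F H hF hH
    change MM Vstar X₀ (vf (F + H))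
    convert MM.add hF hH using 1
    ext x v <;> simp [vf]
  smul_mem' := by
    intro a F hF
    change MM Vstar X₀ (vf (a • F))
    convert MM.smul a hF using 1
    ext x v <;> simp [vf]

/-- Intersection with a set whose indicator is the derivative of a tuple `F ∈ S`: the symmetric
product of `F` with the constant tuple `1_p` is `1_p F' = 1_{p ∧ r}`. -/
lemma indP_and_mem {V : Type} {S : Submodule ℝ (V → ℝ[X])} (hS : SymClosed S)
    {p r : V → Prop} {F : V → ℝ[X]} (hF : F ∈ S)
    (hF' : (fun v => derivative (F v)) = indP r) (hp : indP p ∈ S) :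
    indP (fun v => p v ∧ r v) ∈ S := by
  convert hS _ hF _ hp using 1
  ext1 v
  have : derivative (F v) = indP r v := congrFun hF' v
  by_cases h : p v
  · simp [indP, h, this]
  · simp [indP, h]

/-- Removal of a set whose indicator is the derivative of a tuple in `S`. -/
lemma indP_and_not_mem {V : Type} {S : Submodule ℝ (V → ℝ[X])} (hS : SymClosed S)
    {p r : V → Prop} {F : V → ℝ[X]} (hF : F ∈ S)
    (hF' : (fun v => derivative (F v)) = indP r) (hp : indP p ∈ S) :
    indP (fun v => p v ∧ ¬ r v) ∈ S := by
  convert S.sub_mem hp (indP_and_mem hS hF hF' hp) using 1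
  ext1 v
  by_cases h : p v <;> by_cases h' : r v <;> simp [indP, h, h']

/-- Proposition 5.4. Let `C` be a set of controllable vertices.
Then every `C`-equivalence class `U ⊆ N(C)` (the class of some `v₀ ∈ N(C)`) is jointly
controllable: `∑_{v∈U} ∂_{p_v} ∈ 𝓜`. -/
theorem CEquiv_class_jointly_controllable
    {V : Type} [Fintype V] [DecidableEq V] (G : SimpleGraph V) [DecidableRel G.Adj]
    (Vstar : Finset V) (γ : V → ℝ) (U : V → ℝ → ℝ) (Vp : V → V → Polynomial ℝ)
    (hγpos : ∀ v ∈ Vstar, 0 < γ v) (hγ0 : ∀ v ∉ Vstar, γ v = 0)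
    (hU : ∀ v, ContDiff ℝ (⊤ : ℕ∞) (U v))
    (hsym : ∀ u v, G.Adj u v → ∀ x : ℝ, (Vp v u).eval x = (Vp u v).eval (-x))
    (hdeg : ∀ u v, G.Adj u v → 3 ≤ (Vp u v).natDegree)
    (C : Finset V) (hC : ∀ c ∈ C, Controllable Vstar (X0 G γ U Vp) c) :
    ∀ v₀ ∈ NC G C,
      MM Vstar (X0 G γ U Vp)
        (dpSum ((NC G C).filter fun w => CEquiv G Vp C w v₀)) := by
  intro v₀ hv₀
  have hNC : ∀ w, w ∈ NC G C ↔ w ∉ C ∧ ∃ c ∈ C, G.Adj c w := fun w => by simp [NC]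
  obtain ⟨hv₀C, c₀, hc₀, hadj₀⟩ := (hNC v₀).1 hv₀
  set S := polySpace Vstar (X0 G γ U Vp) (hC c₀ hc₀).1.zero with hSdef
  have hS : SymClosed S := by
    intro F hF H hH
    change MM Vstar (X0 G γ U Vp) (vf _)
    rw [← lieB_lieB_vf G γ U Vp hU F H]
    exact (MM.lieX hF).lie hH
  -- the part of `C`-equivalence that concerns the single vertex `c`
  let rel : V → V → Prop := fun c w => (G.Adj c w ↔ G.Adj c v₀) ∧
    (G.Adj c w → G.Adj c v₀ →
      PolyEquiv (derivative (derivative (Vp c w))) (derivative (derivative (Vp c v₀))))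
  have hrefl : ∀ v c, G.Adj c v →
      derivative (derivative (Vp v c)) = (derivative (derivative (Vp c v))).comp (-X) := by
    intro v c h
    have : Vp v c = (Vp c v).comp (-X) := Polynomial.funext fun x => by
      rw [hsym c v h x]; simp
    rw [this]
    simp [derivative_comp]
  have hequiv : ∀ f g : ℝ[X], (∃ δ, f.comp (-X) = taylor δ (g.comp (-X))) ↔ PolyEquiv f g := by
    intro f g
    unfold PolyEquiv
    constructor
    · rintro ⟨δ, h⟩
      refine ⟨-δ, fun x => ?_⟩
      have := congrArg (eval (-x)) h
      rw [taylor_eval] at this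
      simp only [eval_comp, eval_neg, eval_X, neg_neg] at this
      rw [this]; congr 1; ring
    · rintro ⟨δ, h⟩
      refine ⟨-δ, Polynomial.funext fun x => ?_⟩
      rw [taylor_eval]
      simp only [eval_comp, eval_neg, eval_X]
      rw [h]; congr 1; ring
  have hQne : ∀ c v, v ∉ C → G.Adj c v → Qc G Vp C c v ≠ 0 ∧ (Qc G Vp C c v).natDegree ≠ 0 := by
    intro c v hv h
    have hdg : (Qc G Vp C c v).natDegree ≠ 0 := by
      have h3 := hdeg v c h.symm
      simp only [Qc, hv, h, not_false_eq_true, and_self, if_true]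
      rw [natDegree_derivative, natDegree_derivative]
      omega
    exact ⟨fun h0 => by simp [h0] at hdg, hdg⟩
  have hQ0 : ∀ c v, ¬ (v ∉ C ∧ G.Adj c v) → Qc G Vp C c v = 0 := fun c v h => by
    simp only [Qc, h, if_false]
  have hclass := fun c hc => class_mem hS (Finset.univ.sup fun v => (Qc G Vp C c v).natDegree)
    (Qc G Vp C c) (fun k => MM.Qc_mem G γ U Vp hU C hC c hc k)
    (fun v hv => by
      by_cases h : v ∉ C ∧ G.Adj c v
      · exact (hQne c v h.1 h.2).2
      · exact absurd (hQ0 c v h) hv)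
    (fun v => Finset.le_sup (f := fun v => (Qc G Vp C c v).natDegree) (Finset.mem_univ v))
  have hrel : ∀ c, G.Adj c v₀ → ∀ w, (∃ δ, Qc G Vp C c w = taylor δ (Qc G Vp C c v₀)) ↔
      w ∉ C ∧ G.Adj c w ∧ rel c w := by
    intro c hcv w
    by_cases h : w ∉ C ∧ G.Adj c w
    · have h1 : Qc G Vp C c w = (derivative (derivative (Vp c w))).comp (-X) := by
        simp only [Qc, h, if_true, not_false_eq_true, and_self]; exact hrefl w c h.2
      have h2 : Qc G Vp C c v₀ = (derivative (derivative (Vp c v₀))).comp (-X) := by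
        simp only [Qc, hv₀C, hcv, if_true, not_false_eq_true, and_self]; exact hrefl v₀ c hcv
      rw [h1, h2, hequiv]
      simp [rel, h.1, h.2, hcv]
    · rw [hQ0 c w h]
      constructor
      · rintro ⟨δ, h'⟩
        exact absurd ((taylor_eq_zero _ _).1 h'.symm) (hQne c v₀ hv₀C hcv).1
      · rintro ⟨ha, hb, _⟩
        exact absurd ⟨ha, hb⟩ h
  have hstep : ∀ C' ⊆ C, indP (fun w => (w ∉ C ∧ G.Adj c₀ w ∧ rel c₀ w) ∧
      ∀ c ∈ C', rel c w) ∈ S := by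
    intro C'
    induction C' using Finset.induction_on with
    | empty =>
      intro _
      have := ((hclass c₀ hc₀).2 v₀ (hQne c₀ v₀ hv₀C hadj₀).1).1
      simpa only [hrel c₀ hadj₀, Finset.notMem_empty, false_imp_iff, implies_true,
        and_true] using this
    | insert c C' hcC' ih =>
      intro hsub
      have hcC : c ∈ C := hsub (Finset.mem_insert_self _ _)
      have hI := ih ((Finset.subset_insert _ _).trans hsub)
      by_cases hcv : G.Adj c v₀
      · obtain ⟨F, hF, hF'⟩ := ((hclass c hcC).2 v₀ (hQne c v₀ hv₀C hcv).1).2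
        refine (congrArg (fun p => indP p ∈ S) (funext fun w => propext ?_)).mp
          (indP_and_mem hS hF hF' hI)
        rw [hrel c hcv w, Finset.forall_mem_insert]
        constructor
        · rintro ⟨⟨h1, h2⟩, _, _, h3⟩
          exact ⟨h1, h3, h2⟩
        · rintro ⟨h1, h3, h2⟩
          exact ⟨⟨h1, h2⟩, h1.1, h3.1.2 hcv, h3⟩
      · obtain ⟨F, hF, hF'⟩ := (hclass c hcC).1
        refine (congrArg (fun p => indP p ∈ S) (funext fun w => propext ?_)).mp
          (indP_and_not_mem hS hF hF' hI)
        rw [Finset.forall_mem_insert]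
        constructor
        · rintro ⟨⟨h1, h2⟩, h3⟩
          have ha : ¬ G.Adj c w := fun h => h3 (hQne c w h1.1 h).1
          exact ⟨h1, ⟨iff_of_false ha hcv, fun h => absurd h ha⟩, h2⟩
        · rintro ⟨h1, h3, h2⟩
          exact ⟨⟨h1, h2⟩, not_not.2 (hQ0 c w fun h => hcv (h3.1.1 h.2))⟩
  have hfin : MM Vstar (X0 G γ U Vp) (vf _) := hstep C subset_rfl
  convert hfin using 1
  ext1 x
  ext v
  · simp [dpSum, vf]
  · simp only [dpSum, vf, Finset.sum_apply, Pi.single_apply, Finset.sum_ite_eq, indP]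
    have hiff : v ∈ (NC G C).filter (fun w => CEquiv G Vp C w v₀) ↔
        (v ∉ C ∧ G.Adj c₀ v ∧ rel c₀ v) ∧ ∀ c ∈ C, rel c v := by
      rw [Finset.mem_filter, hNC]
      constructor
      · rintro ⟨⟨hv, _⟩, h1, h2⟩
        exact ⟨⟨hv, (h1 c₀ hc₀).2 hadj₀, h1 c₀ hc₀, h2 c₀ hc₀⟩, fun c hc => ⟨h1 c hc, h2 c hc⟩⟩
      · rintro ⟨⟨hv, ha, _⟩, h⟩
        exact ⟨⟨hv, c₀, hc₀, ha⟩, fun c hc => (h c hc).1, fun c hc => (h c hc).2⟩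
    simp only [hiff]
    split_ifs <;> simp
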